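/- Let t > 1 be such that tk is a positive integer, and suppose A ∈ ℝ^{m×n} satisfies the Restricted Isometry Property of order tk with constant δ := δ_{tk} < √((t−1)/t). Define ν := √(t(t−1)) − (t−1), a := [ν(1−ν) − δ(0.5 − ν + ν²)]^{1/2}, b := ν(1−ν)√(1+δ), and c := [δν²/(2(t−1))]^{1/2}. Then A satisfies the ℓ₂ robust null space property of order k with constants ρ = c/a < 1 and τ = b√k/a²; that is, for every h ∈ ℝⁿ and every set S ⊆ {1,…,n} with |S| ≤ k, ‖h_S‖₂ ≤ (ρ/√k)‖h_{Sᶜ}‖₁ + (τ/√k)‖Ah‖₂. -/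

import Mathlib

/-- The ℓ¹-norm of a vector in ℝⁿ. -/
noncomputable def l1 {n : ℕ} (x : Fin n → ℝ) : ℝ := ∑ i, |x i|

/-- The ℓ²-norm of a vector in ℝⁿ. -/
noncomputable def l2 {n : ℕ} (x : Fin n → ℝ) : ℝ := Real.sqrt (∑ i, (x i) ^ 2)

/-- The ℓᵖ-norm of a vector in ℝⁿ. -/
noncomputable def lpNorm {n : ℕ} (p : ℝ) (x : Fin n → ℝ) : ℝ := (∑ i, |x i| ^ p) ^ (1 / p)

/-- A vector is `k`-sparse if it has at most `k` nonzero components. -/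
def IsSparse {n : ℕ} (k : ℕ) (x : Fin n → ℝ) : Prop :=
  (Finset.univ.filter (fun i => x i ≠ 0)).card ≤ k

/-- The `k`-sparsity index of `x` with respect to the ℓ¹-norm. -/
noncomputable def sigma1 {n : ℕ} (k : ℕ) (x : Fin n → ℝ) : ℝ :=
  sInf ((fun z => l1 (x - z)) '' {z | IsSparse k z})

/-- The `k`-sparsity index of `x` with respect to the ℓ²-norm. -/
noncomputable def sigma2 {n : ℕ} (k : ℕ) (x : Fin n → ℝ) : ℝ :=
  sInf ((fun z => l2 (x - z)) '' {z | IsSparse k z})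

/-- The vector agreeing with `x` on `S` and zero elsewhere. -/
def proj {n : ℕ} (S : Finset (Fin n)) (x : Fin n → ℝ) : Fin n → ℝ :=
  fun i => if i ∈ S then x i else 0

/-- `G` is a partition of `{1,…,n}` into `g` disjoint nonempty subsets. -/
def IsPartition {n g : ℕ} (G : Fin g → Finset (Fin n)) : Prop :=
  (∀ i, (G i).Nonempty) ∧ (∀ i j, i ≠ j → Disjoint (G i) (G j)) ∧
    (∀ x : Fin n, ∃ i, x ∈ G i)

/-- The Sparse Group LASSO norm associated to the partition `G` with parameter `μ`. -/
noncomputable def sglNorm {n g : ℕ} (G : Fin g → Finset (Fin n)) (μ : ℝ) (z : Fin n → ℝ) : ℝ :=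
  ∑ i, ((1 - μ) * l1 (proj (G i) z) + μ * l2 (proj (G i) z))

/-- `A` satisfies the Restricted Isometry Property of order `k` with constant `δ`. -/
def RIP {m n : ℕ} (A : Matrix (Fin m) (Fin n) ℝ) (k : ℕ) (δ : ℝ) : Prop :=
  ∀ u : Fin n → ℝ, IsSparse k u →
    (1 - δ) * (l2 u) ^ 2 ≤ (l2 (A.mulVec u)) ^ 2 ∧
      (l2 (A.mulVec u)) ^ 2 ≤ (1 + δ) * (l2 u) ^ 2

/-- `A` satisfies the ℓ₂ robust null space property of order `k` with constants `ρ`, `τ`. -/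
def RNSP {m n : ℕ} (A : Matrix (Fin m) (Fin n) ℝ) (k : ℕ) (ρ τ : ℝ) : Prop :=
  ∀ h : Fin n → ℝ, ∀ S : Finset (Fin n), S.card ≤ k →
    l2 (proj S h) ≤ (ρ / Real.sqrt k) * l1 (proj Sᶜ h) +
      (τ / Real.sqrt k) * l2 (A.mulVec h)

/-!
Split `h` as `x + v`, where `x` keeps the entries of `h` on `S` together with the entries outside
`S` that exceed the average `α = ‖h_{Sᶜ}‖₁ / d`, with `d = (t - 1) k`. The entries of `v` are at
most `α` in absolute value, so for every `w` some sparse vector `u` with entries at most `α` and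
support disjoint from that of `x` satisfies `⟨w, u⟩ ≤ ⟨w, v⟩`. For `w = AᵀAx` this gives
`⟨Ax, A(x + u)⟩ ≤ ⟨Ax, Ah⟩`, while `‖u‖₂² ≤ d α²` and all combinations of `x` and `u` are
`tk`-sparse.

The lower isometry bound at `x + ν u` and the upper one at `(1/2 - ν) x - (ν/2) u` eliminate
`‖Au‖₂²` and leave `a² ‖x‖₂² ≤ (c²/k) ‖h_{Sᶜ}‖₁² + b ‖Ah‖₂ ‖x‖₂`, a quadratic inequality for
`‖x‖₂ ≥ ‖h_S‖₂`. With the stated `ν` one has `a² - c² = (1 - ν)² (√((t - 1)/t) - δ)`, hence `ρ < 1`.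
-/

theorem le_add_of_sq_le_sq_add_mul {R : Type*} [CommRing R] [LinearOrder R] [IsStrictOrderedRing R]
    {x p q : R} (hp : 0 ≤ p) (hq : 0 ≤ q) (h : x ^ 2 ≤ p ^ 2 + q * x) : x ≤ p + q := by
  by_contra! hlt
  have hpos : 0 < (x - (p + q)) * (x + p) := mul_pos (by linarith) (by linarith)
  linarith [mul_nonneg hq hp,
    show x ^ 2 - q * x - p ^ 2 = (x - (p + q)) * (x + p) + q * p by ring]

section Sums

open Finset

variable {ι : Type*}

theorem exists_subset_card_eq_forall_sdiff_le {β : Type*} [DecidableEq ι] [LinearOrder β]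
    (T : Finset ι) (f : ι → β) {s : ℕ} (hs : s ≤ #T) :
    ∃ B ⊆ T, #B = s ∧ ∀ i ∈ B, ∀ j ∈ T \ B, f j ≤ f i := by
  induction s with
  | zero => exact ⟨∅, empty_subset T, card_empty, by simp⟩
  | succ s ih =>
    obtain ⟨B, hBT, hcard, htop⟩ := ih (Nat.le_of_succ_le hs)
    have hne : (T \ B).Nonempty := by
      rw [← card_pos, card_sdiff_of_subset hBT]
      omega
    obtain ⟨l, hl, hmax⟩ := exists_max_image (T \ B) f hne
    obtain ⟨hlT, hlB⟩ := mem_sdiff.1 hl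
    refine ⟨insert l B, insert_subset hlT hBT, by rw [card_insert_of_notMem hlB, hcard], ?_⟩
    intro i hi j hj
    have hjB : j ∈ T \ B := sdiff_subset_sdiff subset_rfl (subset_insert l B) hj
    rcases mem_insert.1 hi with rfl | hiB
    · exact hmax j hjB
    · exact htop i hiB j hjB

variable {R : Type*} [CommRing R] [LinearOrder R] [IsStrictOrderedRing R]

theorem sum_mul_le_sum_mul_of_forall_forall_le {B C : Finset ι} {f p q : ι → R}
    (hfB : ∀ i ∈ B, 0 ≤ f i) (hfC : ∀ j ∈ C, 0 ≤ f j) (hp : ∀ j ∈ C, 0 ≤ p j)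
    (hq : ∀ i ∈ B, 0 ≤ q i) (hle : ∀ i ∈ B, ∀ j ∈ C, f j ≤ f i)
    (hsum : ∑ j ∈ C, p j ≤ ∑ i ∈ B, q i) :
    ∑ j ∈ C, f j * p j ≤ ∑ i ∈ B, f i * q i := by
  rcases C.eq_empty_or_nonempty with rfl | hC
  · simpa using sum_nonneg fun i hi => mul_nonneg (hfB i hi) (hq i hi)
  obtain ⟨l, hl, hmax⟩ := exists_max_image C f hC
  calc ∑ j ∈ C, f j * p j ≤ ∑ j ∈ C, f l * p j :=
        sum_le_sum fun j hj => mul_le_mul_of_nonneg_right (hmax j hj) (hp j hj)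
    _ = f l * ∑ j ∈ C, p j := (mul_sum ..).symm
    _ ≤ f l * ∑ i ∈ B, q i := mul_le_mul_of_nonneg_left hsum (hfC l hl)
    _ = ∑ i ∈ B, f l * q i := mul_sum ..
    _ ≤ ∑ i ∈ B, f i * q i :=
        sum_le_sum fun i hi => mul_le_mul_of_nonneg_right (hle i hi l hl) (hq i hi)

theorem exists_subset_card_le_sum_mul_le {T : Finset ι} {f g : ι → R} {s : ℕ} {α : R}
    (hf : ∀ i ∈ T, 0 ≤ f i) (hg : ∀ i ∈ T, 0 ≤ g i) (hgα : ∀ i ∈ T, g i ≤ α)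
    (hsum : ∑ i ∈ T, g i ≤ s * α) :
    ∃ B ⊆ T, #B ≤ s ∧ ∑ i ∈ T, f i * g i ≤ ∑ i ∈ B, f i * α := by
  classical
  obtain ⟨B, hBT, hcard, htop⟩ :=
    exists_subset_card_eq_forall_sdiff_le T f (min_le_right s #T)
  have hsumB : ∑ i ∈ T, g i ≤ #B * α := by
    rcases min_choice s #T with hmin | hmin <;> rw [hcard, hmin]
    · exact hsum
    · simpa using sum_le_card_nsmul T g α hgα
  have hexcess : ∑ j ∈ T \ B, g j ≤ ∑ i ∈ B, (α - g i) := by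
    rw [sum_sub_distrib, sum_const, nsmul_eq_mul]
    linarith [sum_sdiff (f := g) hBT]
  have hexchange : ∑ j ∈ T \ B, f j * g j ≤ ∑ i ∈ B, f i * (α - g i) :=
    sum_mul_le_sum_mul_of_forall_forall_le (fun i hi => hf i (hBT hi))
      (fun j hj => hf j (sdiff_subset hj)) (fun j hj => hg j (sdiff_subset hj))
      (fun i hi => sub_nonneg.2 (hgα i (hBT hi))) htop hexcess
  refine ⟨B, hBT, hcard ▸ min_le_left s #T, ?_⟩
  simp only [mul_sub, sum_sub_distrib] at hexchange
  linarith [sum_sdiff (f := fun i => f i * g i) hBT]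

theorem exists_subset_card_le_forall_sdiff_le [DecidableEq ι] {T : Finset ι} {f : ι → R} {d : ℕ}
    {α : R} (hf : ∀ i ∈ T, 0 ≤ f i) (hα : 0 ≤ α) (hsum : ∑ i ∈ T, f i ≤ d * α) :
    ∃ M ⊆ T, #M ≤ d ∧ (∀ i ∈ T \ M, f i ≤ α) ∧ ∑ i ∈ T \ M, f i ≤ (d - #M : ℕ) * α := by
  set M := T.filter (α < f ·)
  have hMT : M ⊆ T := filter_subset _ _
  have hMsum : #M * α ≤ ∑ i ∈ M, f i := by
    rw [← nsmul_eq_mul]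
    exact card_nsmul_le_sum _ _ _ fun i hi => (mem_filter.1 hi).2.le
  have hMd : #M ≤ d := by
    by_contra! hlt
    have hMne : M.Nonempty := card_pos.1 (Nat.zero_lt_of_lt hlt)
    refine lt_irrefl (d * α) ?_
    calc (d : R) * α ≤ #M * α := by gcongr
      _ = ∑ _i ∈ M, α := by rw [sum_const, nsmul_eq_mul]
      _ < ∑ i ∈ M, f i := sum_lt_sum_of_nonempty hMne fun i hi => (mem_filter.1 hi).2
      _ ≤ ∑ i ∈ T, f i := sum_le_sum_of_subset_of_nonneg hMT fun i hi _ => hf i hi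
      _ ≤ d * α := hsum
  refine ⟨M, hMT, hMd, fun i hi => ?_, ?_⟩
  · obtain ⟨hiT, hiM⟩ := mem_sdiff.1 hi
    exact not_lt.1 fun hlt => hiM (mem_filter.2 ⟨hiT, hlt⟩)
  · rw [Nat.cast_sub hMd, sub_mul]
    linarith [sum_sdiff (f := f) hMT]

end Sums

section Vectors

open Finset
open scoped Matrix

variable {m n : ℕ}

theorem l1_nonneg (x : Fin n → ℝ) : 0 ≤ l1 x := sum_nonneg fun _ _ => abs_nonneg _

theorem l2_nonneg (x : Fin n → ℝ) : 0 ≤ l2 x := Real.sqrt_nonneg _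

theorem l2_sq (x : Fin n → ℝ) : l2 x ^ 2 = x ⬝ᵥ x := by
  rw [l2, Real.sq_sqrt (sum_nonneg fun _ _ => sq_nonneg _)]
  simp only [dotProduct, sq]

theorem dotProduct_le_l2_mul_l2 (x y : Fin n → ℝ) : x ⬝ᵥ y ≤ l2 x * l2 y :=
  Real.sum_mul_le_sqrt_mul_sqrt _ _ _

theorem l2_smul_add_smul_sq (p q : ℝ) (x y : Fin n → ℝ) :
    l2 (p • x + q • y) ^ 2 = p ^ 2 * l2 x ^ 2 + 2 * p * q * (x ⬝ᵥ y) + q ^ 2 * l2 y ^ 2 := by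
  simp only [l2_sq, dotProduct_add, add_dotProduct, smul_dotProduct, dotProduct_smul, smul_eq_mul,
    dotProduct_comm y x]
  ring

theorem dotProduct_proj (w x : Fin n → ℝ) (S : Finset (Fin n)) :
    w ⬝ᵥ proj S x = ∑ i ∈ S, w i * x i := by
  simp [dotProduct, proj]

theorem l1_proj (S : Finset (Fin n)) (x : Fin n → ℝ) : l1 (proj S x) = ∑ i ∈ S, |x i| := by
  simp [l1, proj, apply_ite]

theorem l2_proj (S : Finset (Fin n)) (x : Fin n → ℝ) :
    l2 (proj S x) = √(∑ i ∈ S, x i ^ 2) := by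
  simp [l2, proj, ite_pow]

theorem l2_proj_mono {S M : Finset (Fin n)} (hSM : S ⊆ M) (x : Fin n → ℝ) :
    l2 (proj S x) ≤ l2 (proj M x) := by
  rw [l2_proj, l2_proj]
  exact Real.sqrt_le_sqrt (sum_le_sum_of_subset_of_nonneg hSM fun _ _ _ => sq_nonneg _)

theorem l2_proj_sq_le {B : Finset (Fin n)} {u : Fin n → ℝ} {α : ℝ} (hu : ∀ i ∈ B, |u i| ≤ α) :
    l2 (proj B u) ^ 2 ≤ #B * α ^ 2 := by
  rw [l2_proj, Real.sq_sqrt (sum_nonneg fun _ _ => sq_nonneg _), ← nsmul_eq_mul]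
  exact sum_le_card_nsmul _ _ _ fun i hi => sq_le_sq.2 ((hu i hi).trans (le_abs_self α))

theorem proj_dotProduct_proj_of_disjoint {M B : Finset (Fin n)} (hMB : Disjoint M B)
    (x u : Fin n → ℝ) : proj M x ⬝ᵥ proj B u = 0 := by
  rw [dotProduct_proj]
  refine sum_eq_zero fun i hi => ?_
  simp [proj, disjoint_right.1 hMB hi]

theorem proj_add_proj_compl (M : Finset (Fin n)) (x : Fin n → ℝ) :
    proj M x + proj Mᶜ x = x := by
  funext i
  by_cases hi : i ∈ M <;> simp [proj, hi]

theorem isSparse_smul_proj_add_smul_proj {K : ℕ} {M B : Finset (Fin n)} (hcard : #M + #B ≤ K)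
    (p q : ℝ) (x u : Fin n → ℝ) : IsSparse K (p • proj M x + q • proj B u) := by
  have hsupport : univ.filter (fun i => (p • proj M x + q • proj B u) i ≠ 0) ⊆ M ∪ B := by
    intro i hi
    contrapose! hi
    simp only [mem_union, not_or] at hi
    simp [proj, hi.1, hi.2]
  exact (card_le_card hsupport).trans ((card_union_le M B).trans hcard)

-- A linear functional on the polytope `{v : |v i| ≤ α, ∑ |v i| ≤ s α}` is minimized at a vertex,
-- and the vertices are the `s`-sparse vectors with nonzero entries `±α`.
theorem exists_dotProduct_proj_le (w v : Fin n → ℝ) {T : Finset (Fin n)} {s : ℕ} {α : ℝ}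
    (hv : ∀ i ∈ T, |v i| ≤ α) (hsum : ∑ i ∈ T, |v i| ≤ s * α) :
    ∃ B ⊆ T, #B ≤ s ∧ ∃ u : Fin n → ℝ, (∀ i ∈ B, |u i| ≤ α) ∧ w ⬝ᵥ proj B u ≤ w ⬝ᵥ proj T v := by
  obtain ⟨B, hBT, hBs, hB⟩ := exists_subset_card_le_sum_mul_le (f := fun i => |w i|)
    (fun _ _ => abs_nonneg _) (fun _ _ => abs_nonneg _) hv hsum
  refine ⟨B, hBT, hBs, fun i => -(SignType.sign (w i) * α), fun i hi => ?_, ?_⟩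
  · have hα : 0 ≤ α := (abs_nonneg _).trans (hv i (hBT hi))
    rcases lt_trichotomy (w i) 0 with hw | hw | hw <;> simp [hw, hα, abs_of_nonneg hα]
  · have hvertex : w ⬝ᵥ proj B (fun i => -(SignType.sign (w i) * α)) = -∑ i ∈ B, |w i| * α := by
      rw [dotProduct_proj, ← sum_neg_distrib]
      exact sum_congr rfl fun i _ => by rw [← self_mul_sign (w i)]; ring
    have hpoint : -∑ i ∈ T, |w i| * |v i| ≤ w ⬝ᵥ proj T v := by
      rw [dotProduct_proj, ← sum_neg_distrib]
      exact sum_le_sum fun i _ => by rw [← abs_mul]; exact neg_abs_le _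
    linarith

theorem exists_head_sparse_tail (A : Matrix (Fin m) (Fin n) ℝ) (h : Fin n → ℝ)
    (S : Finset (Fin n)) {d : ℕ} {α : ℝ} (hα : 0 ≤ α) (hsum : l1 (proj Sᶜ h) ≤ d * α) :
    ∃ M B : Finset (Fin n), S ⊆ M ∧ Disjoint M B ∧ #M + #B ≤ #S + d ∧ #B ≤ d ∧
      ∃ u : Fin n → ℝ, (∀ i ∈ B, |u i| ≤ α) ∧
        A *ᵥ proj M h ⬝ᵥ A *ᵥ (proj M h + proj B u) ≤ A *ᵥ proj M h ⬝ᵥ A *ᵥ h := by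
  rw [l1_proj] at hsum
  obtain ⟨N, -, hNd, htail, htailsum⟩ :=
    exists_subset_card_le_forall_sdiff_le (fun _ _ => abs_nonneg _) hα hsum
  have hcompl : Sᶜ \ N = (S ∪ N)ᶜ := by rw [compl_union, sdiff_eq_inter_compl]
  rw [hcompl] at htail htailsum
  set x := proj (S ∪ N) h
  obtain ⟨B, hB, hBcard, u, huα, hu⟩ :=
    exists_dotProduct_proj_le ((A *ᵥ x) ᵥ* A) h htail htailsum
  refine ⟨S ∪ N, B, subset_union_left, ?_, ?_, by omega, u, huα, ?_⟩
  · exact disjoint_right.2 fun i hi => mem_compl.1 (hB hi)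
  · have := card_union_le S N
    omega
  · rw [← Matrix.dotProduct_mulVec, ← Matrix.dotProduct_mulVec] at hu
    nth_rewrite 4 [← proj_add_proj_compl (S ∪ N) h]
    simpa only [Matrix.mulVec_add, dotProduct_add, add_le_add_iff_left] using hu

end Vectors

namespace RIP

open Finset
open scoped Matrix

variable {m n : ℕ} {A : Matrix (Fin m) (Fin n) ℝ} {K : ℕ} {δ : ℝ}

theorem l2_mulVec_le (hA : RIP A K δ) {x : Fin n → ℝ} (hx : IsSparse K x) :
    l2 (A *ᵥ x) ≤ √(1 + δ) * l2 x := by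
  rw [← Real.sqrt_sq (l2_nonneg x), ← Real.sqrt_mul' _ (sq_nonneg _)]
  exact Real.le_sqrt_of_sq_le (hA x hx).2

theorem mul_l2_sq_le_of_dotProduct_eq_zero (hA : RIP A K δ) {x u : Fin n → ℝ}
    (hsparse : ∀ p q : ℝ, IsSparse K (p • x + q • u)) (horth : x ⬝ᵥ u = 0) (ν : ℝ) :
    (ν * (1 - ν) - δ * (1 / 2 - ν + ν ^ 2)) * l2 x ^ 2 ≤
      δ * ν ^ 2 / 2 * l2 u ^ 2 + ν * (1 - ν) * (A *ᵥ x ⬝ᵥ A *ᵥ (x + u)) := by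
  have hlower := (hA _ (hsparse 1 ν)).1
  have hupper := (hA _ (hsparse (1 / 2 - ν) (-ν / 2))).2
  simp only [Matrix.mulVec_add, Matrix.mulVec_smul, l2_smul_add_smul_sq, horth] at hlower hupper
  rw [Matrix.mulVec_add, dotProduct_add, ← l2_sq]
  linarith

theorem exists_superset_mul_l2_proj_sq_le {k d : ℕ} (hA : RIP A (k + d) δ) (hd : 0 < d)
    (hδ : 0 ≤ δ) {ν : ℝ} (hν : 0 ≤ ν * (1 - ν)) (h : Fin n → ℝ) {S : Finset (Fin n)}
    (hS : #S ≤ k) :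
    ∃ M, S ⊆ M ∧ (ν * (1 - ν) - δ * (1 / 2 - ν + ν ^ 2)) * l2 (proj M h) ^ 2 ≤
      δ * ν ^ 2 / 2 * (l1 (proj Sᶜ h) ^ 2 / d) +
        ν * (1 - ν) * √(1 + δ) * l2 (A *ᵥ h) * l2 (proj M h) := by
  set L := l1 (proj Sᶜ h)
  have hd' : (0 : ℝ) < d := Nat.cast_pos.2 hd
  have hL : 0 ≤ L := l1_nonneg _
  obtain ⟨M, B, hSM, hMB, hcard, hBd, u, huα, hAu⟩ :=
    exists_head_sparse_tail A h S (d := d) (α := L / d) (by positivity)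
      (mul_div_cancel₀ L hd'.ne').ge
  set x := proj M h
  set y := proj B u
  have hsparse (p q : ℝ) : IsSparse (k + d) (p • x + q • y) :=
    isSparse_smul_proj_add_smul_proj (by omega) p q h u
  have hx : IsSparse (k + d) x := by simpa using hsparse 1 0
  have hy : l2 y ^ 2 ≤ L ^ 2 / d := calc
    l2 y ^ 2 ≤ #B * (L / d) ^ 2 := l2_proj_sq_le huα
    _ ≤ d * (L / d) ^ 2 := by gcongr
    _ = L ^ 2 / d := by field_simp
  have hcross : A *ᵥ x ⬝ᵥ A *ᵥ (x + y) ≤ √(1 + δ) * l2 (A *ᵥ h) * l2 x := calc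
    A *ᵥ x ⬝ᵥ A *ᵥ (x + y) ≤ A *ᵥ x ⬝ᵥ A *ᵥ h := hAu
    _ ≤ l2 (A *ᵥ x) * l2 (A *ᵥ h) := dotProduct_le_l2_mul_l2 _ _
    _ ≤ √(1 + δ) * l2 x * l2 (A *ᵥ h) :=
      mul_le_mul_of_nonneg_right (hA.l2_mulVec_le hx) (l2_nonneg _)
    _ = √(1 + δ) * l2 (A *ᵥ h) * l2 x := by ring
  refine ⟨M, hSM, ?_⟩
  calc _ ≤ δ * ν ^ 2 / 2 * l2 y ^ 2 + ν * (1 - ν) * (A *ᵥ x ⬝ᵥ A *ᵥ (x + y)) :=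
        hA.mul_l2_sq_le_of_dotProduct_eq_zero hsparse
          (proj_dotProduct_proj_of_disjoint hMB h u) ν
    _ ≤ δ * ν ^ 2 / 2 * (L ^ 2 / d) + ν * (1 - ν) * (√(1 + δ) * l2 (A *ᵥ h) * l2 x) := by gcongr
    _ = _ := by ring

theorem rnsp {k d : ℕ} (hA : RIP A (k + d) δ) (hk : 0 < k) (hd : 0 < d) (hδ : 0 ≤ δ)
    {ν a c : ℝ} (hν : 0 ≤ ν * (1 - ν)) (ha : 0 < a)
    (ha2 : a ^ 2 = ν * (1 - ν) - δ * (1 / 2 - ν + ν ^ 2))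
    (hc : 0 ≤ c) (hc2 : c ^ 2 = δ * ν ^ 2 / 2 * (k / d)) :
    RNSP A k (c / a) (ν * (1 - ν) * √(1 + δ) * √k / a ^ 2) := by
  intro h S hS
  obtain ⟨M, hSM, hM⟩ := hA.exists_superset_mul_l2_proj_sq_le hd hδ hν h hS
  refine (l2_proj_mono hSM h).trans ?_
  have hL : 0 ≤ l1 (proj Sᶜ h) := l1_nonneg _
  have hH : 0 ≤ l2 (A *ᵥ h) := l2_nonneg _
  set L := l1 (proj Sᶜ h)
  set H := l2 (A *ᵥ h)
  set X := l2 (proj M h)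
  set b := ν * (1 - ν) * √(1 + δ)
  have : 0 ≤ b := mul_nonneg hν (Real.sqrt_nonneg _)
  have hk' : (0 : ℝ) < k := Nat.cast_pos.2 hk
  refine le_add_of_sq_le_sq_add_mul (by positivity) (by positivity)
    (le_of_mul_le_mul_left ?_ (pow_pos ha 2))
  calc a ^ 2 * X ^ 2 ≤ δ * ν ^ 2 / 2 * (L ^ 2 / d) + b * H * X := by rwa [ha2]
    _ = c ^ 2 * L ^ 2 / k + b * H * X := by rw [hc2]; field_simp
    _ = a ^ 2 * ((c / a / √k * L) ^ 2 + b * √k / a ^ 2 / √k * H * X) := by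
      field_simp
      rw [Real.sq_sqrt hk'.le]
      ring

end RIP

/-- The interpolation weight `ν = √(t(t - 1)) - (t - 1)` at which the restricted isometry bounds
for order `tk` are combined; it solves `ν / (1 - ν) = √((t - 1) / t)`. Meaningful for `t ≥ 1`. -/
noncomputable def rnspWeight (t : ℝ) : ℝ := √(t * (t - 1)) - (t - 1)

section Weight

variable {t : ℝ}

theorem rnspWeight_lt_one (ht : 1 ≤ t) : rnspWeight t < 1 := by
  have : √(t * (t - 1)) < t := (Real.sqrt_lt' (by linarith)).2 (by nlinarith)
  unfold rnspWeight
  linarith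

theorem rnspWeight_eq_sqrt_mul (ht : 1 ≤ t) :
    rnspWeight t = √((t - 1) / t) * (1 - rnspWeight t) := by
  have ht0 : 0 < t := by linarith
  have hr2 : √((t - 1) / t) ^ 2 * t = t - 1 := by
    rw [Real.sq_sqrt (div_nonneg (by linarith) ht0.le)]
    field_simp
  have hs : √(t * (t - 1)) = √((t - 1) / t) * t := by
    rw [← Real.sqrt_sq ht0.le, ← Real.sqrt_mul' _ (sq_nonneg t),
      Real.sqrt_sq ht0.le]
    congr 1
    field_simp
  rw [rnspWeight, hs]
  linear_combination hr2

theorem rnspWeight_nonneg (ht : 1 ≤ t) : 0 ≤ rnspWeight t := by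
  rw [rnspWeight_eq_sqrt_mul ht]
  exact mul_nonneg (Real.sqrt_nonneg _) (sub_nonneg.2 (rnspWeight_lt_one ht).le)

theorem rnspWeight_sq (ht : 1 ≤ t) :
    rnspWeight t ^ 2 = (t - 1) * (1 - 2 * rnspWeight t) := by
  have hs : √(t * (t - 1)) ^ 2 = t * (t - 1) := Real.sq_sqrt (by nlinarith)
  unfold rnspWeight
  linear_combination hs

theorem rnspWeight_gap_eq (ht : 1 < t) (δ : ℝ) :
    rnspWeight t * (1 - rnspWeight t) - δ * (1 / 2 - rnspWeight t + rnspWeight t ^ 2)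
        - δ * rnspWeight t ^ 2 / (2 * (t - 1)) =
      (1 - rnspWeight t) ^ 2 * (√((t - 1) / t) - δ) := by
  have hquot : δ * rnspWeight t ^ 2 / (2 * (t - 1)) = δ * (1 / 2 - rnspWeight t) := by
    have : t - 1 ≠ 0 := (sub_pos.2 ht).ne'
    rw [rnspWeight_sq ht.le]
    field_simp
  rw [hquot]
  linear_combination (1 - rnspWeight t) * rnspWeight_eq_sqrt_mul ht.le

theorem mul_rnspWeight_sq_div_lt {δ : ℝ} (ht : 1 < t) (hδ : δ < √((t - 1) / t)) :
    δ * rnspWeight t ^ 2 / (2 * (t - 1)) <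
      rnspWeight t * (1 - rnspWeight t) - δ * (1 / 2 - rnspWeight t + rnspWeight t ^ 2) := by
  rw [← sub_pos, rnspWeight_gap_eq ht]
  exact mul_pos (pow_pos (sub_pos.2 (rnspWeight_lt_one ht.le)) 2) (sub_pos.2 hδ)

end Weight

/-- RIP of order `tk` with constant `δ < √((t−1)/t)` implies the ℓ₂ robust
null space property of order `k` with the stated constants. -/
theorem stmt6 (m n k tk : ℕ) (hk : 0 < k) (t : ℝ) (ht : 1 < t) (htk : 0 < tk)
    (htkeq : (tk : ℝ) = t * k)
    (A : Matrix (Fin m) (Fin n) ℝ) (δ : ℝ) (hδ0 : 0 ≤ δ)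
    (hRIP : RIP A tk δ) (hδ : δ < Real.sqrt ((t - 1) / t))
    (ν a b c ρ τ : ℝ)
    (hν : ν = Real.sqrt (t * (t - 1)) - (t - 1))
    (ha : a = Real.sqrt (ν * (1 - ν) - δ * (0.5 - ν + ν ^ 2)))
    (hb : b = ν * (1 - ν) * Real.sqrt (1 + δ))
    (hc : c = Real.sqrt (δ * ν ^ 2 / (2 * (t - 1))))
    (hρ : ρ = c / a) (hτ : τ = b * Real.sqrt k / a ^ 2) :
    ρ < 1 ∧ RNSP A k ρ τ := by
  obtain rfl : ν = rnspWeight t := hν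
  norm_num only at ha
  have ht' : 0 < t - 1 := sub_pos.2 ht
  have : (0 : ℝ) < k := Nat.cast_pos.2 hk
  obtain ⟨d, rfl⟩ : ∃ d, tk = k + d :=
    Nat.exists_eq_add_of_le (by exact_mod_cast (show (k : ℝ) ≤ tk by rw [htkeq]; nlinarith))
  have hd : (d : ℝ) = (t - 1) * k := by push_cast at htkeq; linarith
  have hd0 : 0 < d := by exact_mod_cast (show (0 : ℝ) < d by rw [hd]; positivity)
  have hc0 : 0 ≤ δ * rnspWeight t ^ 2 / (2 * (t - 1)) := by positivity
  have hca := mul_rnspWeight_sq_div_lt ht hδ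
  have ha0 : 0 < a := ha ▸ Real.sqrt_pos.2 (hc0.trans_lt hca)
  have hν : 0 ≤ rnspWeight t * (1 - rnspWeight t) :=
    mul_nonneg (rnspWeight_nonneg ht.le) (sub_nonneg.2 (rnspWeight_lt_one ht.le).le)
  subst hρ hτ hb
  refine ⟨(div_lt_one ha0).2 (hc ▸ ha ▸ Real.sqrt_lt_sqrt hc0 hca), ?_⟩
  refine hRIP.rnsp hk hd0 hδ0 hν ha0 ?_ (hc ▸ Real.sqrt_nonneg _) ?_
  · rw [ha, Real.sq_sqrt (hc0.trans hca.le)]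
  · rw [hc, Real.sq_sqrt hc0, hd]
    field_simp
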